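/- arXiv:1303.2475 — 4 statements merged into one kernel-verified Lean document; each statement's English description precedes it below -/
import Mathlib

section
/- The map sending a pair (i,j) ∈ I(n,d) × I(n,d) to the matrix D(i,j) is constant on orbits of the diagonal S_d-action (i.e. D(w • i, w • j) = D(i,j) for all w ∈ S_d), and the induced map from the set of S_d-orbits on I(n,d) × I(n,d) to M(n,d) is a bijection. -/
/-!
The matrix `D(i,j)` records the cardinalities of the fibres of `k ↦ (i k, j k)`. Two maps out of
finite types differ by a bijection of their sources exactly when corresponding fibres have the same
size (glue bijections between the fibres), and a family of sizes is realised by a map out of a given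
finite type exactly when it sums to the cardinality of that type (identify the type with a disjoint
union of sets of the given sizes, and project).
-/

open Finset

noncomputable section

/-- The action of `S_d` on `I(n,d) = Fin d → Fin n`, `w • i = i ∘ w⁻¹`. -/
def permAct {n d : ℕ} (w : Equiv.Perm (Fin d)) (i : Fin d → Fin n) : Fin d → Fin n :=
  i ∘ ⇑w⁻¹

lemma permAct_one {n d : ℕ} (i : Fin d → Fin n) : permAct 1 i = i := rfl

lemma permAct_mul {n d : ℕ} (w v : Equiv.Perm (Fin d)) (i : Fin d → Fin n) :
    permAct (w * v) i = permAct w (permAct v i) := by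
  funext k
  simp [permAct, mul_inv_rev]

/-- The matrix `D(i,j)` with `(a,b)` entry `#{k | i k = a ∧ j k = b}`. -/
def Dmat {n d : ℕ} (i j : Fin d → Fin n) : Matrix (Fin n) (Fin n) ℕ :=
  fun a b => (Finset.univ.filter (fun k => i k = a ∧ j k = b)).card

/-- `M(n,d)`: matrices of naturals with entries summing to `d`. -/
def Mset (n d : ℕ) : Set (Matrix (Fin n) (Fin n) ℕ) :=
  {D | ∑ a, ∑ b, D a b = d}

/-- The setoid on `I(n,d) × I(n,d)` whose classes are the orbits of the diagonal
`S_d`-action. -/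
def orbitSetoid (n d : ℕ) : Setoid ((Fin d → Fin n) × (Fin d → Fin n)) where
  r p q := ∃ w : Equiv.Perm (Fin d), (permAct w p.1, permAct w p.2) = q
  iseqv := by
    constructor
    · intro p
      exact ⟨1, by simp [permAct_one]⟩
    · rintro p q ⟨w, h⟩
      refine ⟨w⁻¹, ?_⟩
      rw [← h]
      simp [← permAct_mul, permAct_one]
    · rintro p q r ⟨w, hw⟩ ⟨v, hv⟩
      refine ⟨v * w, ?_⟩
      rw [← hv, ← hw]
      simp [permAct_mul]

section Fiber

variable {ι κ α : Type*} [Fintype ι] [Fintype κ] [DecidableEq α]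

lemma exists_equiv_comp_eq_iff_card_fiber_eq {f : ι → α} {g : κ → α} :
    (∃ e : ι ≃ κ, g ∘ e = f) ↔ ∀ a, #{x | f x = a} = #{y | g y = a} := by
  constructor
  · rintro ⟨e, rfl⟩ a
    exact card_equiv e fun x => by simp only [mem_filter_univ, Function.comp_apply]
  · intro h
    have fiberEquiv (a : α) : {x // f x = a} ≃ {y // g y = a} :=
      Fintype.equivOfCardEq (by simp only [Fintype.card_subtype, h a])
    exact ⟨Equiv.ofFiberEquiv fiberEquiv, funext (Equiv.ofFiberEquiv_map fiberEquiv)⟩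

lemma card_fiber_sigma_fst [Fintype α] {β : α → Type*} [∀ a, Fintype (β a)] (a : α) :
    #{x : Σ a, β a | x.1 = a} = Fintype.card (β a) := by
  rw [← Fintype.card_subtype, Fintype.card_congr (Equiv.sigmaSubtype a)]

lemma exists_card_fiber_eq_iff_sum_eq_card [Fintype α] {m : α → ℕ} :
    (∃ f : ι → α, ∀ a, #{x | f x = a} = m a) ↔ ∑ a, m a = Fintype.card ι := by
  constructor
  · rintro ⟨f, hf⟩
    simp only [← hf]
    exact (card_eq_sum_card_fiberwise fun x _ => mem_coe.2 (mem_univ (f x))).symm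
  · intro hm
    have e : ι ≃ Σ a, Fin (m a) :=
      Fintype.equivOfCardEq (by simp only [Fintype.card_sigma, Fintype.card_fin, hm])
    refine ⟨Sigma.fst ∘ e, fun a => ?_⟩
    rw [exists_equiv_comp_eq_iff_card_fiber_eq.1 ⟨e, rfl⟩ a, card_fiber_sigma_fst,
      Fintype.card_fin]

end Fiber

section Dmat

variable {n d : ℕ}

lemma Dmat_eq_iff_card_fiber_prod {i j : Fin d → Fin n} {D : Matrix (Fin n) (Fin n) ℕ} :
    Dmat i j = D ↔ ∀ c : Fin n × Fin n, #{k | Function.prod i j k = c} = D c.1 c.2 := by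
  simp only [← Matrix.ext_iff, Dmat, Prod.forall, Function.prod_apply, Prod.mk.injEq]

lemma permAct_eq_iff_comp_eq {w : Equiv.Perm (Fin d)} {i i' : Fin d → Fin n} :
    permAct w i = i' ↔ i' ∘ w = i :=
  (Equiv.comp_symm_eq w i' i).trans eq_comm

lemma Dmat_eq_iff_exists_permAct_eq {i j i' j' : Fin d → Fin n} :
    Dmat i j = Dmat i' j' ↔
      ∃ w : Equiv.Perm (Fin d), (permAct w i, permAct w j) = (i', j') :=
  calc
    Dmat i j = Dmat i' j' ↔
        ∀ c, #{k | Function.prod i j k = c} = #{k | Function.prod i' j' k = c} := by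
      simp only [Dmat_eq_iff_card_fiber_prod, Dmat_eq_iff_card_fiber_prod.1 rfl]
    _ ↔ ∃ w : Equiv.Perm (Fin d), Function.prod i' j' ∘ w = Function.prod i j :=
      exists_equiv_comp_eq_iff_card_fiber_eq.symm
    _ ↔ ∃ w : Equiv.Perm (Fin d), (permAct w i, permAct w j) = (i', j') := by
      simp only [Function.prod_comp, Function.prod_inj, Prod.mk.injEq, permAct_eq_iff_comp_eq]

lemma exists_Dmat_eq_iff_mem_Mset {D : Matrix (Fin n) (Fin n) ℕ} :
    (∃ p : (Fin d → Fin n) × (Fin d → Fin n), Dmat p.1 p.2 = D) ↔ D ∈ Mset n d :=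
  calc
    (∃ p : (Fin d → Fin n) × (Fin d → Fin n), Dmat p.1 p.2 = D) ↔
        ∃ f : Fin d → Fin n × Fin n, ∀ c, #{k | f k = c} = D c.1 c.2 := by
      have prod_surjective : Function.Surjective
          fun p : (Fin d → Fin n) × (Fin d → Fin n) => Function.prod p.1 p.2 :=
        fun f => ⟨(Prod.fst ∘ f, Prod.snd ∘ f), rfl⟩
      simp only [Dmat_eq_iff_card_fiber_prod, prod_surjective.exists]
    _ ↔ ∑ c : Fin n × Fin n, D c.1 c.2 = d := by
      rw [exists_card_fiber_eq_iff_sum_eq_card, Fintype.card_fin]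
    _ ↔ D ∈ Mset n d := by
      rw [Fintype.sum_prod_type, Mset, Set.mem_ofPred_eq]

end Dmat

/-- `(i,j) ↦ D(i,j)` is constant on orbits of the diagonal `S_d`-action, and the induced
map from the set of orbits to `M(n,d)` is a bijection. -/
theorem Dmat_orbit_bijection (n d : ℕ) (hn : 0 < n) (hd : 0 < d) :
    (∀ (w : Equiv.Perm (Fin d)) (i j : Fin d → Fin n),
      Dmat (permAct w i) (permAct w j) = Dmat i j)
    ∧ ∃ F : Quotient (orbitSetoid n d) → Matrix (Fin n) (Fin n) ℕ,
        (∀ i j : Fin d → Fin n, F (Quotient.mk (orbitSetoid n d) (i, j)) = Dmat i j)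
        ∧ Function.Injective F ∧ Set.range F = Mset n d := by
  have Dmat_permAct (w : Equiv.Perm (Fin d)) (i j : Fin d → Fin n) :
      Dmat (permAct w i) (permAct w j) = Dmat i j :=
    (Dmat_eq_iff_exists_permAct_eq.2 ⟨w, rfl⟩).symm
  let F : Quotient (orbitSetoid n d) → Matrix (Fin n) (Fin n) ℕ :=
    Quotient.lift (fun p => Dmat p.1 p.2) fun _ _ h => Dmat_eq_iff_exists_permAct_eq.2 h
  have F_injective : Function.Injective F := by
    rintro ⟨p⟩ ⟨q⟩ h
    exact Quotient.sound (Dmat_eq_iff_exists_permAct_eq.1 h)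
  have range_F : Set.range F = Mset n d :=
    (Set.range_quot_lift _).trans (Set.ext fun _ => exists_Dmat_eq_iff_mem_Mset)
  exact ⟨Dmat_permAct, F, fun _ _ => rfl, F_injective, range_F⟩

end
end

section
/- Let λ be a partition of d. If (i,j) and (i',j') are pairs in I(n,d) × I(n,d) lying in the same orbit of the diagonal S_d-action, then #{w ∈ S_d : w has cycle type λ and w • j = i} = #{w ∈ S_d : w has cycle type λ and w • j' = i'}. Consequently, for D ∈ M(n,d), the number c_{λ,D} := #{w ∈ S_d : cycle type of w is λ and w • j = i}, computed for any (i,j) with D(i,j) = D, is well defined. -/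
/-!
If `w • j = i`, then `u * w * u⁻¹` takes `u • j` to `u • i`, and it has the same cycle type as `w`;
so conjugation by `u` is a bijection between the permutations counted for `(i, j)` and those counted
for `(u • i, u • j)`. The entries of `D(i, j)` are the sizes of the fibres of `k ↦ (i k, j k)`, so
when `D(i, j) = D(i', j')` the fibres can be matched by bijections, which glue to a permutation
carrying `(i, j)` to `(i', j')`.
-/

open Finset

noncomputable section

/-- `w ∈ S_d` has cycle type the partition `λ` of `d` (fixed points counted as
`1`-cycles). -/
def HasCycleType {d : ℕ} (w : Equiv.Perm (Fin d)) (lam : Nat.Partition d) : Prop :=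
  w.partition.parts = lam.parts

theorem card_transporter_smul_smul {G X : Type*} [Group G] [MulAction G X] {P : G → Prop}
    (hP : ∀ ⦃v w : G⦄, IsConj v w → (P v ↔ P w)) (u : G) (x y : X) :
    Nat.card {w : G // P w ∧ w • u • y = u • x} = Nat.card {w : G // P w ∧ w • y = x} := by
  have conj_smul (w : G) : (u * w * u⁻¹) • u • y = u • x ↔ w • y = x := by
    rw [smul_smul, inv_mul_cancel_right, mul_smul, smul_left_cancel_iff]
  have conj_mem (w : G) : P w ↔ P (u * w * u⁻¹) := hP (isConj_iff.mpr ⟨u, rfl⟩)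
  exact (Nat.card_congr <| (MulAut.conj u).toEquiv.subtypeEquiv fun w =>
    and_congr (conj_mem w) (conj_smul w).symm).symm

theorem exists_equiv_comp_eq_of_card_fiber_eq {α β γ : Type*} {f : α → γ} {g : β → γ}
    [∀ c, Finite {a // f a = c}] [∀ c, Finite {b // g b = c}]
    (h : ∀ c, Nat.card {a // f a = c} = Nat.card {b // g b = c}) :
    ∃ e : α ≃ β, g ∘ e = f :=
  ⟨Equiv.ofFiberEquiv fun c => (Finite.card_eq.mp (h c)).some,
    funext fun a => Equiv.ofFiberEquiv_map _ a⟩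

theorem hasCycleType_iff_of_isConj {d : ℕ} {v w : Equiv.Perm (Fin d)} (h : IsConj v w)
    (lam : Nat.Partition d) : HasCycleType v lam ↔ HasCycleType w lam := by
  rw [HasCycleType, HasCycleType, Equiv.Perm.partition_eq_of_isConj.mp h]

theorem card_cycleType_transporter_permAct {n d : ℕ} (lam : Nat.Partition d)
    (u : Equiv.Perm (Fin d)) (i j : Fin d → Fin n) :
    Nat.card {w : Equiv.Perm (Fin d) //
        HasCycleType w lam ∧ permAct w (permAct u j) = permAct u i}
      = Nat.card {w : Equiv.Perm (Fin d) // HasCycleType w lam ∧ permAct w j = i} :=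
  -- `permAct` is definitionally the scalar multiplication of `arrowAction`.
  letI : MulAction (Equiv.Perm (Fin d)) (Fin d → Fin n) := arrowAction
  card_transporter_smul_smul (fun _ _ h => hasCycleType_iff_of_isConj h lam) u i j

theorem Dmat_apply_eq_card_fiber {n d : ℕ} (i j : Fin d → Fin n) (a b : Fin n) :
    Dmat i j a b = Nat.card {k // (i k, j k) = (a, b)} := by
  simp only [Dmat, Prod.mk.injEq, Nat.card_eq_fintype_card, Fintype.card_subtype]

theorem exists_permAct_eq_of_Dmat_eq {n d : ℕ} {i j i' j' : Fin d → Fin n}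
    (h : Dmat i j = Dmat i' j') :
    ∃ u : Equiv.Perm (Fin d), (permAct u i, permAct u j) = (i', j') := by
  have card_fiber (p : Fin n × Fin n) :
      Nat.card {k // (i' k, j' k) = p} = Nat.card {k // (i k, j k) = p} := by
    rw [← Dmat_apply_eq_card_fiber, ← Dmat_apply_eq_card_fiber, h]
  obtain ⟨e, he⟩ := exists_equiv_comp_eq_of_card_fiber_eq card_fiber
  refine ⟨e⁻¹, Prod.ext ?_ ?_⟩
  · exact congrArg (Prod.fst ∘ ·) he
  · exact congrArg (Prod.snd ∘ ·) he

/-- If `(i,j)` and `(i',j')` lie in the same orbit of the diagonal `S_d`-action, then the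
number of permutations of cycle type `λ` taking `j` to `i` equals the number taking `j'`
to `i'`; consequently the count `c_{λ,D}` is well defined, depending only on `D(i,j)`. -/
theorem card_cycleType_transporter_orbit_invariant (n d : ℕ) (hn : 0 < n) (hd : 0 < d)
    (lam : Nat.Partition d) :
    (∀ i j i' j' : Fin d → Fin n,
      (∃ w : Equiv.Perm (Fin d), (permAct w i, permAct w j) = (i', j')) →
        Nat.card {w : Equiv.Perm (Fin d) // HasCycleType w lam ∧ permAct w j = i}
          = Nat.card {w : Equiv.Perm (Fin d) // HasCycleType w lam ∧ permAct w j' = i'})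
    ∧ (∀ i j i' j' : Fin d → Fin n, Dmat i j = Dmat i' j' →
        Nat.card {w : Equiv.Perm (Fin d) // HasCycleType w lam ∧ permAct w j = i}
          = Nat.card {w : Equiv.Perm (Fin d) // HasCycleType w lam ∧ permAct w j' = i'}) := by
  have orbit_invariant (i j i' j' : Fin d → Fin n)
      (h : ∃ u : Equiv.Perm (Fin d), (permAct u i, permAct u j) = (i', j')) :
      Nat.card {w : Equiv.Perm (Fin d) // HasCycleType w lam ∧ permAct w j = i}
        = Nat.card {w : Equiv.Perm (Fin d) // HasCycleType w lam ∧ permAct w j' = i'} := by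
    obtain ⟨u, ⟨⟩⟩ := h
    exact (card_cycleType_transporter_permAct lam u i j).symm
  exact ⟨orbit_invariant, fun i j i' j' h =>
    orbit_invariant i j i' j' (exists_permAct_eq_of_Dmat_eq h)⟩

end
end

section
/- For every partition λ of d, the element Z_λ = Σ_{D ∈ M(n,d)} c_{λ,D} · ξ_D lies in the centre of the Schur algebra S_K(n,d): Z_λ ∈ S_K(n,d) and Z_λ ∘ φ = φ ∘ Z_λ for every φ ∈ S_K(n,d). -/
/-!
`Z_λ` is the class sum `∑ w` over the permutations `w` of cycle type `λ`, acting on `K[I(n,d)]`: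
both have `(i,j)` matrix entry the number of such `w` with `w • j = i`. A class sum is central in
the group algebra of `S_d`, so `Z_λ` commutes with the action of `S_d`. An element of the Schur
algebra commutes with every `w`, hence with `Z_λ`.
-/

open Finset

noncomputable section

theorem Mset_finite (n d : ℕ) : (Mset n d).Finite := by
  apply Set.Finite.subset (Set.finite_range
    (fun f : Fin n → Fin n → Fin (d + 1) => (fun a b => ((f a b : ℕ)) : Matrix (Fin n) (Fin n) ℕ)))
  intro D hD
  have hle : ∀ a b, D a b ≤ d := by
    intro a b
    have h1 : D a b ≤ ∑ b', D a b' :=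
      Finset.single_le_sum (fun _ _ => Nat.zero_le _) (Finset.mem_univ b)
    have h2 : (∑ b', D a b') ≤ ∑ a', ∑ b', D a' b' :=
      Finset.single_le_sum (f := fun a' => ∑ b', D a' b') (fun _ _ => Nat.zero_le _)
        (Finset.mem_univ a)
    have h3 : ∑ a', ∑ b', D a' b' = d := hD
    omega
  exact ⟨fun a b => ⟨D a b, Nat.lt_succ_of_le (hle a b)⟩, rfl⟩

/-- `M(n,d)` as a finset. -/
def MFin (n d : ℕ) : Finset (Matrix (Fin n) (Fin n) ℕ) := (Mset_finite n d).toFinset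

/-- The action of `w ∈ S_d` on `K[I(n,d)]`, `(w • f)(i) = f (w⁻¹ • i)`, as a linear map. -/
def rho (K : Type*) [Field K] {n d : ℕ} (w : Equiv.Perm (Fin d)) :
    Module.End K ((Fin d → Fin n) → K) where
  toFun f := fun i => f (fun k => i (w k))
  map_add' _ _ := rfl
  map_smul' _ _ := rfl

/-- The Schur algebra as a set: endomorphisms of `K[I(n,d)]` commuting with the
`S_d`-action. -/
def SchurSet (K : Type*) [Field K] (n d : ℕ) : Set (Module.End K ((Fin d → Fin n) → K)) :=
  {φ | ∀ w : Equiv.Perm (Fin d), φ ∘ₗ rho K w = rho K w ∘ₗ φ}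

/-- The operator `ξ_D` on `K[I(n,d)]`. -/
def xi (K : Type*) [Field K] {n d : ℕ} (D : Matrix (Fin n) (Fin n) ℕ) :
    Module.End K ((Fin d → Fin n) → K) where
  toFun f := fun i => ∑ j ∈ Finset.univ.filter (fun j => Dmat i j = D), f j
  map_add' f g := by funext i; simp [Finset.sum_add_distrib]
  map_smul' c f := by funext i; simp [Finset.mul_sum]

theorem commute_map_sum_of_conj_mem {F G A : Type*} [Group G] [NonUnitalNonAssocSemiring A]
    [FunLike F G A] [MulHomClass F G A] (ρ : F) {S : Finset G}
    (hS : ∀ v, ∀ w ∈ S, v * w * v⁻¹ ∈ S) (v : G) : Commute (ρ v) (∑ w ∈ S, ρ w) :=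
  calc ρ v * ∑ w ∈ S, ρ w
      = ∑ w ∈ S, ρ (v * w) := by simp only [mul_sum, map_mul]
    _ = ∑ w ∈ S, ρ (w * v) :=
        sum_nbij' (v * · * v⁻¹) (v⁻¹ * · * v) (hS v)
          (fun w hw => by simpa only [inv_inv] using hS v⁻¹ w hw)
          (fun w _ => by group) (fun w _ => by group)
          (fun w _ => by rw [inv_mul_cancel_right])
    _ = (∑ w ∈ S, ρ w) * ρ v := by simp only [sum_mul, map_mul]

section

variable {n d : ℕ}

theorem permAct_eq_iff {w : Equiv.Perm (Fin d)} {i j : Fin d → Fin n} :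
    permAct w j = i ↔ i ∘ w = j :=
  (Equiv.comp_symm_eq w i j).trans eq_comm

theorem sum_Dmat (i j : Fin d → Fin n) : ∑ a, ∑ b, Dmat i j a b = d := by
  have hfibers : #(univ : Finset (Fin d)) = ∑ ab : Fin n × Fin n, #{k | (i k, j k) = ab} :=
    card_eq_sum_card_fiberwise fun _ _ => mem_coe.2 (mem_univ _)
  simpa only [Dmat, card_univ, Fintype.card_fin, Prod.mk.injEq, Fintype.sum_prod_type]
    using hfibers.symm

theorem Dmat_mem_MFin (i j : Fin d → Fin n) : Dmat i j ∈ MFin n d :=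
  (Mset_finite n d).mem_toFinset.2 (sum_Dmat i j)

theorem HasCycleType.conj {w : Equiv.Perm (Fin d)} {lam : Nat.Partition d}
    (hw : HasCycleType w lam) (v : Equiv.Perm (Fin d)) : HasCycleType (v * w * v⁻¹) lam := by
  have hpart : w.partition = (v * w * v⁻¹).partition :=
    Equiv.Perm.partition_eq_of_isConj.1 (isConj_iff.2 ⟨v, rfl⟩)
  rwa [HasCycleType, ← hpart]

variable (K : Type*) [Field K]

/-- The place permutation representation of `S_d` on `K[I(n,d)]`: the operators `rho K w` bundled
into a monoid homomorphism. -/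
def permRep (n d : ℕ) : Representation K (Equiv.Perm (Fin d)) ((Fin d → Fin n) → K) where
  toFun := rho K
  map_one' := rfl
  map_mul' _ _ := rfl

variable {K}

theorem sum_smul_xi_apply {R : Type*} [Monoid R] [DistribMulAction R K] [SMulCommClass K R K]
    (c : Matrix (Fin n) (Fin n) ℕ → R) (f : (Fin d → Fin n) → K) (i : Fin d → Fin n) :
    (∑ D ∈ MFin n d, c D • xi K D) f i = ∑ j, c (Dmat i j) • f j :=
  calc (∑ D ∈ MFin n d, c D • xi K D) f i
      = ∑ D ∈ MFin n d, c D • ∑ j with Dmat i j = D, f j := by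
        simp only [LinearMap.sum_apply, LinearMap.smul_apply, Finset.sum_apply, Pi.smul_apply]
        rfl
    _ = ∑ D ∈ MFin n d, ∑ j with Dmat i j = D, c (Dmat i j) • f j := by
        refine sum_congr rfl fun D _ => ?_
        rw [smul_sum]
        exact sum_congr rfl fun j hj => by rw [(mem_filter.1 hj).2]
    _ = ∑ j, c (Dmat i j) • f j :=
        sum_fiberwise_of_maps_to (fun j _ => Dmat_mem_MFin i j) _

theorem sum_rho_apply (S : Finset (Equiv.Perm (Fin d))) (f : (Fin d → Fin n) → K)
    (i : Fin d → Fin n) :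
    (∑ w ∈ S, rho K w) f i = ∑ j, #{w ∈ S | permAct w j = i} • f j :=
  calc (∑ w ∈ S, rho K w) f i
      = ∑ w ∈ S, f (i ∘ w) := by
        simp only [LinearMap.sum_apply, Finset.sum_apply]
        rfl
    _ = ∑ j, ∑ w ∈ S with permAct w j = i, f j := by
        simp only [permAct_eq_iff]
        exact (sum_fiberwise' S (i ∘ ⇑·) f).symm
    _ = ∑ j, #{w ∈ S | permAct w j = i} • f j := by simp only [sum_const]

theorem sum_smul_xi_eq_sum_rho {S : Finset (Equiv.Perm (Fin d))}
    {c : Matrix (Fin n) (Fin n) ℕ → ℕ}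
    (hc : ∀ i j : Fin d → Fin n, c (Dmat i j) = #{w ∈ S | permAct w j = i}) :
    ∑ D ∈ MFin n d, c D • xi K D = ∑ w ∈ S, rho K w := by
  refine LinearMap.ext fun f => funext fun i => ?_
  simp only [sum_smul_xi_apply, sum_rho_apply, hc]

theorem sum_rho_mem_SchurSet {S : Finset (Equiv.Perm (Fin d))}
    (hS : ∀ v, ∀ w ∈ S, v * w * v⁻¹ ∈ S) : ∑ w ∈ S, rho K w ∈ SchurSet K n d :=
  fun v => (commute_map_sum_of_conj_mem (permRep K n d) hS v).symm

theorem sum_rho_comp_of_mem_SchurSet {φ : Module.End K ((Fin d → Fin n) → K)}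
    (hφ : φ ∈ SchurSet K n d) (S : Finset (Equiv.Perm (Fin d))) :
    (∑ w ∈ S, rho K w) ∘ₗ φ = φ ∘ₗ ∑ w ∈ S, rho K w :=
  Commute.sum_left S (rho K) φ fun w _ => (hφ w).symm

end

/-- For every partition `λ` of `d`, the element `Z_λ = ∑_D c_{λ,D} ξ_D` lies in the centre
of the Schur algebra `S_K(n,d)`. -/
theorem Z_mem_centre (K : Type*) [Field K] (n d : ℕ) (hn : 0 < n) (hd : 0 < d)
    (lam : Nat.Partition d) (c : Matrix (Fin n) (Fin n) ℕ → ℕ)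
    (hc : ∀ i j : Fin d → Fin n,
      c (Dmat i j)
        = Nat.card {w : Equiv.Perm (Fin d) // HasCycleType w lam ∧ permAct w j = i}) :
    (∑ D ∈ MFin n d, c D • xi K D) ∈ SchurSet K n d
    ∧ ∀ φ ∈ SchurSet K n d,
        (∑ D ∈ MFin n d, c D • xi K D) ∘ₗ φ = φ ∘ₗ (∑ D ∈ MFin n d, c D • xi K D) := by
  classical
  let S : Finset (Equiv.Perm (Fin d)) := {w | HasCycleType w lam}
  have hS : ∀ v, ∀ w ∈ S, v * w * v⁻¹ ∈ S := by
    simpa only [S, mem_filter_univ] using fun v w hw => HasCycleType.conj hw v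
  have hcard : ∀ i j : Fin d → Fin n, c (Dmat i j) = #{w ∈ S | permAct w j = i} := fun i j => by
    rw [hc, Nat.subtype_card, filter_filter]
    simp only [mem_filter_univ, implies_true]
  rw [sum_smul_xi_eq_sum_rho hcard]
  exact ⟨sum_rho_mem_SchurSet hS, fun _ hφ => sum_rho_comp_of_mem_SchurSet hφ S⟩

end
end

section
/- Suppose K has characteristic zero. Then the centre of the Schur algebra S_K(n,d) equals the image under ρ of the centre of the group algebra K[S_d]; that is, an element z ∈ S_K(n,d) is central in S_K(n,d) if and only if z = Σ_{w ∈ S_d} a(w) ρ(w) for some class function a : S_d → K (a constant on conjugacy classes). -/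
/-! For a semisimple finite-dimensional representation `ρ` of `G`, the density theorem says that
whatever commutes with all `G`-endomorphisms is the action of some `r ∈ K[G]`. If `ρ(r)` moreover
commutes with every `ρ(g)`, conjugating `r` by group elements does not change `ρ(r)`, so `r` may be
replaced by its average over conjugation, which is central in `K[G]`. Maschke's theorem makes
`K[I(n,d)]` semisimple. -/

open Finset

noncomputable section

open scoped MonoidAlgebra

theorem centralizer_centralizer_range_lsmul {K R M : Type*} [CommRing K] [Ring R] [Algebra K R]
    [AddCommGroup M] [Module K M] [Module R M] [IsScalarTower K R M] [IsSemisimpleModule R M]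
    [Module.Finite (Module.End R M) M] :
    Subalgebra.centralizer K
        (Subalgebra.centralizer K
          ((Algebra.lsmul K K M : R →ₐ[K] _).range : Set (Module.End K M))) =
      (Algebra.lsmul K K M : R →ₐ[K] _).range := by
  refine le_antisymm (fun z hz => ?_) (Subalgebra.le_centralizer_centralizer K)
  have map_apply (φ : Module.End R M) (x : M) : z (φ x) = φ (z x) := by
    refine (LinearMap.congr_fun (hz (φ.restrictScalars K) ?_) x).symm
    rintro _ ⟨r, rfl⟩
    exact LinearMap.ext fun y => (φ.map_smul r y).symm
  obtain ⟨r, hr⟩ := Module.Finite.toModuleEnd_moduleEnd_surjective (R := R)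
    { z with map_smul' := map_apply }
  exact ⟨r, LinearMap.ext fun x => LinearMap.congr_fun hr x⟩

section GroupAlgebra

variable {K G : Type*} [CommSemiring K]

theorem mem_centralizer_range_iff_forall_commute_of [Monoid G] {A : Type*} [Semiring A]
    [Algebra K A] {f : K[G] →ₐ[K] A} {z : A} :
    z ∈ Subalgebra.centralizer K (f.range : Set A) ↔ ∀ g, Commute (f (.of K G g)) z := by
  refine ⟨fun h g => h _ ⟨_, rfl⟩, ?_⟩
  rintro h _ ⟨r, rfl⟩
  change Commute (f r) z
  induction r using MonoidAlgebra.induction_on with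
  | of g => exact h g
  | add x y hx hy => simpa only [map_add] using hx.add_left hy
  | smul c x hx => simpa only [map_smul] using hx.smul_left c

theorem mem_center_monoidAlgebra_iff_forall_commute_of [Monoid G] {r : K[G]} :
    r ∈ Subalgebra.center K K[G] ↔ ∀ g, Commute (.of K G g) r := by
  rw [← Subalgebra.centralizer_univ, ← Algebra.coe_top (R := K), ← Algebra.range_id]
  exact mem_centralizer_range_iff_forall_commute_of

theorem mem_center_groupAlgebra_iff_coeff_conj [Group G] {r : K[G]} :
    r ∈ Subalgebra.center K K[G] ↔ ∀ u w, r.coeff (u * w * u⁻¹) = r.coeff w := by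
  rw [mem_center_monoidAlgebra_iff_forall_commute_of]
  refine forall_congr' fun u => ?_
  rw [commute_iff_eq, MonoidAlgebra.ext_iff, Finsupp.ext_iff,
    ← (Equiv.mulLeft u).forall_congr_right]
  simp [eq_comm]

variable [Group G] [Fintype G] [Invertible (Fintype.card G : K)]

/-- The average of the conjugates of `r` under the group elements: the Reynolds operator projecting
the group algebra onto its centre. -/
def conjAverage (r : K[G]) : K[G] :=
  ⅟(Fintype.card G : K) • ∑ g : G, .of K G g * r * .of K G g⁻¹

theorem conjAverage_mem_center (r : K[G]) : conjAverage r ∈ Subalgebra.center K K[G] := by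
  refine mem_center_monoidAlgebra_iff_forall_commute_of.2 fun u => .smul_right ?_ _
  rw [commute_iff_eq, Finset.mul_sum, Finset.sum_mul]
  refine Fintype.sum_equiv (Equiv.mulLeft u) _ _ fun g => ?_
  simp only [Equiv.coe_mulLeft, mul_inv_rev, map_mul, mul_assoc]
  rw [← map_mul _ u⁻¹, inv_mul_cancel, map_one, mul_one]

theorem map_conjAverage {A : Type*} [Semiring A] [Algebra K A] {f : K[G] →ₐ[K] A} {r : K[G]}
    (hr : f r ∈ Subalgebra.centralizer K (f.range : Set A)) : f (conjAverage r) = f r := by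
  have map_conj (g : G) : f (.of K G g * r * .of K G g⁻¹) = f r := by
    rw [map_mul, map_mul, (mem_centralizer_range_iff_forall_commute_of.1 hr g).eq, mul_assoc,
      ← map_mul f, ← map_mul (MonoidAlgebra.of K G), mul_inv_cancel, map_one, map_one, mul_one]
  rw [conjAverage, map_smul, map_sum, Fintype.sum_congr _ _ map_conj, Finset.sum_const,
    Finset.card_univ, ← Nat.cast_smul_eq_nsmul K, invOf_smul_smul]

theorem map_center_eq_range_inf_centralizer {A : Type*} [Semiring A] [Algebra K A]
    (f : K[G] →ₐ[K] A) :
    (Subalgebra.center K K[G]).map f = f.range ⊓ Subalgebra.centralizer K (f.range : Set A) := by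
  apply le_antisymm
  · rintro _ ⟨r, hr, rfl⟩
    exact ⟨⟨r, rfl⟩, mem_centralizer_range_iff_forall_commute_of.2 fun g =>
      (mem_center_monoidAlgebra_iff_forall_commute_of.1 hr g).map f⟩
  · rintro _ ⟨⟨r, rfl⟩, hr⟩
    exact ⟨conjAverage r, conjAverage_mem_center r, map_conjAverage hr⟩

end GroupAlgebra

section Representation

variable {K G V : Type*} [CommSemiring K] [AddCommMonoid V] [Module K V]

theorem mem_centralizer_range_asAlgebraHom [Monoid G] {ρ : Representation K G V}
    {φ : Module.End K V} :
    φ ∈ Subalgebra.centralizer K (ρ.asAlgebraHom.range : Set (Module.End K V)) ↔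
      ∀ g, Commute φ (ρ g) := by
  simp only [mem_centralizer_range_iff_forall_commute_of, Representation.asAlgebraHom_of,
    commute_iff_eq, eq_comm]

theorem asAlgebraHom_eq_sum_coeff [Monoid G] [Fintype G] (ρ : Representation K G V) (r : K[G]) :
    ρ.asAlgebraHom r = ∑ g, r.coeff g • ρ g := by
  rw [Representation.asAlgebraHom_def, MonoidAlgebra.lift_apply,
    Finsupp.sum_fintype _ _ (by simp only [zero_smul, implies_true])]

theorem mem_map_center_asAlgebraHom_iff [Group G] [Fintype G] {ρ : Representation K G V}
    {z : Module.End K V} :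
    z ∈ (Subalgebra.center K K[G]).map ρ.asAlgebraHom ↔
      ∃ a : G → K, (∀ u w, a (u * w * u⁻¹) = a w) ∧ z = ∑ w, a w • ρ w := by
  constructor
  · rintro ⟨r, hr, rfl⟩
    exact ⟨r.coeff, mem_center_groupAlgebra_iff_coeff_conj.1 hr, asAlgebraHom_eq_sum_coeff ρ r⟩
  · rintro ⟨a, ha, rfl⟩
    exact ⟨.ofCoeff (Finsupp.equivFunOnFinite.symm a), mem_center_groupAlgebra_iff_coeff_conj.2 ha,
      asAlgebraHom_eq_sum_coeff ρ _⟩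

end Representation

section SemisimpleRepresentation

variable {K G V : Type*} [Field K] [AddCommGroup V] [Module K V]

theorem centralizer_centralizer_range_asAlgebraHom [Monoid G] [Module.Finite K V]
    (ρ : Representation K G V) [hρ : ρ.IsSemisimpleRepresentation] :
    Subalgebra.centralizer K
        (Subalgebra.centralizer K (ρ.asAlgebraHom.range : Set (Module.End K V))) =
      ρ.asAlgebraHom.range := by
  have := ρ.isSemisimpleRepresentation_iff_isSemisimpleModule_asModule.1 hρ
  have : Module.Finite (Module.End K[G] ρ.asModule) ρ.asModule :=
    Module.Finite.of_restrictScalars_finite K _ _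
  exact centralizer_centralizer_range_lsmul (K := K) (R := K[G]) (M := ρ.asModule)

theorem centre_schurAlgebra_eq_image_centre_groupAlgebra_general [Group G] [Fintype G]
    [NeZero (Nat.card G : K)] [Module.Finite K V] (ρ : Representation K G V) (z : Module.End K V)
    (hz : ∀ g, Commute z (ρ g)) :
    (∀ φ : Module.End K V, (∀ g, Commute φ (ρ g)) → Commute z φ) ↔
      ∃ a : G → K, (∀ u w, a (u * w * u⁻¹) = a w) ∧ z = ∑ w, a w • ρ w := by
  have : Invertible (Fintype.card G : K) :=
    invertibleOfNonzero (Nat.card_eq_fintype_card (α := G) ▸ NeZero.ne _)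
  calc
    _ ↔ z ∈ Subalgebra.centralizer K
          (Subalgebra.centralizer K (ρ.asAlgebraHom.range : Set (Module.End K V))) :=
      forall_congr' fun φ => imp_congr mem_centralizer_range_asAlgebraHom.symm eq_comm
    _ ↔ z ∈ ρ.asAlgebraHom.range := by rw [centralizer_centralizer_range_asAlgebraHom]
    _ ↔ z ∈ ρ.asAlgebraHom.range ⊓ Subalgebra.centralizer K ρ.asAlgebraHom.range :=
      (and_iff_left (mem_centralizer_range_asAlgebraHom.2 hz)).symm
    _ ↔ z ∈ (Subalgebra.center K K[G]).map ρ.asAlgebraHom := by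
      rw [map_center_eq_range_inf_centralizer]
    _ ↔ _ := mem_map_center_asAlgebraHom_iff

end SemisimpleRepresentation

/-- `K[I(n,d)]` as a bundled representation of `S_d`. -/
def rhoRepresentation (K : Type*) [Field K] (n d : ℕ) :
    Representation K (Equiv.Perm (Fin d)) ((Fin d → Fin n) → K) where
  toFun := rho K
  map_one' := rfl
  map_mul' _ _ := rfl

/-- In characteristic zero, an element of the Schur algebra is central if and only if it
is the image under `ρ` of a central element of the group algebra `K[S_d]`, i.e. of a
`K`-linear combination `∑_w a(w) w` with `a` a class function on `S_d`. -/
theorem centre_schurAlgebra_eq_image_centre_groupAlgebra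
    (K : Type*) [Field K] [CharZero K] (n d : ℕ) (hn : 0 < n) (hd : 0 < d)
    (z : Module.End K ((Fin d → Fin n) → K)) (hz : z ∈ SchurSet K n d) :
    (∀ φ ∈ SchurSet K n d, z ∘ₗ φ = φ ∘ₗ z) ↔
      ∃ a : Equiv.Perm (Fin d) → K,
        (∀ u w : Equiv.Perm (Fin d), a (u * w * u⁻¹) = a w)
        ∧ z = ∑ w : Equiv.Perm (Fin d), a w • rho K w :=
  centre_schurAlgebra_eq_image_centre_groupAlgebra_general (rhoRepresentation K n d) z hz

end
end
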